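/- Let k and A be integers with 0 ≤ A < k and k − A odd. Then 2∫_0^{π/2} sin(kx) cos(Ax)/sin(x) dx = π. -/

import Mathlib

open MeasureTheory

/-!
The product-to-sum formula `2 sin(kx) cos(Ax) = sin((k - A)x) + sin((k + A)x)` reduces everything to
the integrals of `sin(nx) / sin x` over `[0, π/2]` with `n` odd. For `n` positive, replacing `n` by
`n + 2` adds `2 cos((n + 1)x)` to the integrand, whose integral vanishes because `n + 1` is even and
nonzero; the value is therefore the one for `n = 1`, namely `π/2`. The integrand is odd in `n`.
-/

lemma ae_sin_ne_zero : ∀ᵐ x : ℝ, Real.sin x ≠ 0 := by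
  have zeros_countable : (Set.range fun n : ℤ ↦ n * Real.pi).Countable := Set.countable_range _
  filter_upwards [zeros_countable.ae_notMem volume] with x hx
  rwa [Ne, Real.sin_eq_zero_iff]

-- Off the zeros of `sin`, the quotient is the Chebyshev polynomial `U (n - 1)` at `cos x`.
lemma intervalIntegrable_sin_int_mul_div_sin (n : ℤ) (a b : ℝ) :
    IntervalIntegrable (fun x : ℝ ↦ Real.sin (n * x) / Real.sin x) volume a b := by
  have chebyshev_integrable : IntervalIntegrable
      (fun x : ℝ ↦ (Polynomial.Chebyshev.U ℝ (n - 1)).eval (Real.cos x)) volume a b :=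
    Continuous.intervalIntegrable (by fun_prop) a b
  refine chebyshev_integrable.congr_ae (ae_restrict_of_ae ?_)
  filter_upwards [ae_sin_ne_zero] with x hx
  rw [eq_div_iff hx, Polynomial.Chebyshev.U_real_cos]
  simp

lemma sin_add_two_mul_div_sin {x : ℝ} (hx : Real.sin x ≠ 0) (c : ℝ) :
    Real.sin ((c + 2) * x) / Real.sin x
      = Real.sin (c * x) / Real.sin x + 2 * Real.cos ((c + 1) * x) := by
  rw [← sub_eq_iff_eq_add', ← sub_div, div_eq_iff hx, Real.sin_sub_sin]
  ring_nf

lemma integral_sin_int_add_two_mul_div_sin (n : ℤ) (a b : ℝ) :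
    ∫ x in a..b, Real.sin ((n + 2) * x) / Real.sin x
      = (∫ x in a..b, Real.sin (n * x) / Real.sin x)
        + 2 * ∫ x in a..b, Real.cos ((n + 1) * x) := by
  have cos_integrable : IntervalIntegrable (fun x : ℝ ↦ 2 * Real.cos ((n + 1) * x)) volume a b :=
    Continuous.intervalIntegrable (by fun_prop) a b
  rw [← intervalIntegral.integral_const_mul,
    ← intervalIntegral.integral_add (intervalIntegrable_sin_int_mul_div_sin n a b) cos_integrable]
  refine intervalIntegral.integral_congr_ae ?_
  filter_upwards [ae_sin_ne_zero] with x hx _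
  exact sin_add_two_mul_div_sin hx n

lemma integral_cos_two_mul_int_mul {m : ℤ} (hm : m ≠ 0) :
    ∫ x in (0 : ℝ)..(Real.pi / 2), Real.cos (2 * m * x) = 0 := by
  have two_mul_m_ne_zero : (2 * m : ℝ) ≠ 0 := by simpa using hm
  have endpoint : 2 * (m : ℝ) * (Real.pi / 2) = m * Real.pi := by ring
  rw [intervalIntegral.integral_comp_mul_left Real.cos two_mul_m_ne_zero, integral_cos, endpoint,
    Real.sin_int_mul_pi]
  simp

lemma integral_sin_two_mul_add_one_mul_div_sin (n : ℕ) :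
    ∫ x in (0 : ℝ)..(Real.pi / 2), Real.sin ((2 * n + 1) * x) / Real.sin x = Real.pi / 2 := by
  induction n with
  | zero =>
    have integrand_eq_one : ∀ᵐ x : ℝ, x ∈ Set.uIoc 0 (Real.pi / 2) →
        Real.sin ((2 * (0 : ℕ) + 1) * x) / Real.sin x = 1 := by
      filter_upwards [ae_sin_ne_zero] with x hx _
      simp [hx]
    rw [intervalIntegral.integral_congr_ae integrand_eq_one]
    simp
  | succ n ih =>
    have next_frequency : 2 * ((n + 1 : ℕ) : ℝ) + 1 = (2 * n + 1 : ℤ) + 2 := by push_cast; ring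
    have cos_frequency : ((2 * n + 1 : ℤ) : ℝ) + 1 = 2 * (n + 1 : ℤ) := by push_cast; ring
    rw [next_frequency, integral_sin_int_add_two_mul_div_sin, cos_frequency,
      integral_cos_two_mul_int_mul (by lia), mul_zero, add_zero]
    exact_mod_cast ih

lemma integral_sin_odd_mul_div_sin {n : ℤ} (hn : Odd n) :
    ∫ x in (0 : ℝ)..(Real.pi / 2), Real.sin (n * x) / Real.sin x = n.sign * (Real.pi / 2) := by
  have of_pos {m : ℤ} (hm : Odd m) (m_pos : 0 < m) :
      ∫ x in (0 : ℝ)..(Real.pi / 2), Real.sin (m * x) / Real.sin x = Real.pi / 2 := by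
    obtain ⟨j, rfl⟩ := hm
    lift j to ℕ using by lia
    exact_mod_cast integral_sin_two_mul_add_one_mul_div_sin j
  rcases lt_trichotomy n 0 with n_neg | rfl | n_pos
  · have neg_integral := of_pos hn.neg (neg_pos.mpr n_neg)
    simp only [Int.cast_neg, neg_mul, Real.sin_neg, neg_div,
      intervalIntegral.integral_neg] at neg_integral
    rw [Int.sign_eq_neg_one_of_neg n_neg]
    push_cast
    linarith
  · simp at hn
  · simp [of_pos hn n_pos, Int.sign_eq_one_of_pos n_pos]

theorem I1_integral_eq_pi_general (k A : ℤ) (hodd : Odd (k - A)) :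
    2 * ∫ x in (0 : ℝ)..(Real.pi / 2), Real.sin (k * x) * Real.cos (A * x) / Real.sin x
      = ((k - A).sign + (k + A).sign) * (Real.pi / 2) := by
  have hodd_add : Odd (k + A) := by
    rwa [Int.odd_add, ← Int.odd_sub]
  have product_to_sum (x : ℝ) : 2 * (Real.sin (k * x) * Real.cos (A * x) / Real.sin x)
      = Real.sin ((k - A : ℤ) * x) / Real.sin x + Real.sin ((k + A : ℤ) * x) / Real.sin x := by
    push_cast
    rw [← add_div, sub_mul, add_mul, ← Real.two_mul_sin_mul_cos]
    ring
  rw [← intervalIntegral.integral_const_mul]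
  simp only [product_to_sum]
  rw [intervalIntegral.integral_add (intervalIntegrable_sin_int_mul_div_sin _ _ _)
      (intervalIntegrable_sin_int_mul_div_sin _ _ _),
    integral_sin_odd_mul_div_sin hodd, integral_sin_odd_mul_div_sin hodd_add]
  ring

/-- For integers `0 ≤ A < k` with `k - A` odd,
`2∫₀^{π/2} sin(kx)cos(Ax)/sin(x) dx = π`. -/
theorem I1_integral_eq_pi (k A : ℤ) (hA : 0 ≤ A) (hAk : A < k) (hodd : Odd (k - A)) :
    2 * ∫ x in (0 : ℝ)..(Real.pi / 2),
        Real.sin (k * x) * Real.cos (A * x) / Real.sin x = Real.pi := by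
  rw [I1_integral_eq_pi_general k A hodd, Int.sign_eq_one_of_pos (by lia : 0 < k - A),
    Int.sign_eq_one_of_pos (by lia : 0 < k + A)]
  push_cast
  ring
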